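/- There is an absolute constant C such that for every a > 0, every c ∈ ℝ, and every z = α + iβ ∈ ℂ, one has ∫_{0}^{∞} ∫_{v}^{∞} ((α - c - u)² + (β - v)²)^{-1/2} · (u² + v²)^{-1/4} · e^{-a·u·v} du dv ≤ C · a^{-1/4}. -/

import Mathlib

open Real MeasureTheory

/-! Two monovarying nonnegative functions satisfy `f i * g j ≤ f i * g i + f j * g j`. Applied to
`f = (·)^{-p}` and `g = (·)^{-q}` this decouples the Cauchy kernel from the stationary-point
singularity, leaving two translates of `(u² + w²)^{-(p+q)}`, whose integral in `u` is a multiple of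
`|w|^{1-2(p+q)}` by scaling. On `u > v` the decay `e^{-auv}` is at most the Gaussian `e^{-av²}`, and
the same inequality, now for `f = |·|^{1-2(p+q)}` and `g = e^{-a|·|²}`, moves the Gaussian onto the
singularity of the kernel at height `v = y`. What is left is translation invariant: three copies of
a Gaussian moment, which scales as `a^{p+q-1}`. -/

section Monovary

variable {ι R : Type*} [Ring R] [LinearOrder R] [IsStrictOrderedRing R]
  {f g : ι → R} {s : Set ι} {i j : ι}

lemma mul_le_mul_add_mul_of_monovaryOn (hfg : MonovaryOn f g s) (hi : i ∈ s) (hj : j ∈ s)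
    (hf : 0 ≤ f j) (hg : 0 ≤ g i) : f i * g j ≤ f i * g i + f j * g j :=
  (le_add_of_nonneg_right (mul_nonneg hf hg)).trans (hfg.mul_add_mul_le_mul_add_mul hi hj)

end Monovary

lemma rpow_neg_mul_rpow_neg_le_add {x y p q : ℝ} (hx : 0 < x) (hy : 0 < y) (hp : 0 ≤ p)
    (hq : 0 ≤ q) : x ^ (-p) * y ^ (-q) ≤ x ^ (-(p + q)) + y ^ (-(p + q)) := by
  have hmono : MonovaryOn (fun t : ℝ => t ^ (-p)) (fun t => t ^ (-q)) (Set.Ioi 0) :=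
    (antitoneOn_rpow_Ioi_of_exponent_nonpos (neg_nonpos.2 hp)).monovaryOn
      (antitoneOn_rpow_Ioi_of_exponent_nonpos (neg_nonpos.2 hq))
  rw [neg_add, rpow_add hx, rpow_add hy]
  exact mul_le_mul_add_mul_of_monovaryOn hmono hx hy (rpow_nonneg hy.le _) (rpow_nonneg hx.le _)

lemma abs_rpow_mul_exp_neg_mul_sq_le_add {a r v w : ℝ} (ha : 0 ≤ a) (hr : r ≤ 0) (hv : v ≠ 0)
    (hw : w ≠ 0) :
    |w| ^ r * exp (-a * v ^ 2) ≤ |w| ^ r * exp (-a * w ^ 2) + |v| ^ r * exp (-a * v ^ 2) := by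
  have hexp : AntitoneOn (fun t : ℝ => exp (-a * t ^ 2)) (Set.Ioi 0) := fun s hs t _ hst => by
    have hs : 0 < s := hs
    simp only [neg_mul]
    gcongr
  have hmono := (antitoneOn_rpow_Ioi_of_exponent_nonpos hr).monovaryOn hexp
  simpa only [sq_abs] using mul_le_mul_add_mul_of_monovaryOn hmono (abs_pos.2 hw) (abs_pos.2 hv)
    (rpow_nonneg (abs_nonneg v) _) (exp_nonneg _)

section NormSqAddSq

variable {E : Type*} [NormedAddCommGroup E] [NormedSpace ℝ E]

lemma norm_sq_add_sq_rpow_neg (u : E) {w : ℝ} (hw : w ≠ 0) (s : ℝ) :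
    (‖u‖ ^ 2 + w ^ 2) ^ (-s) = |w| ^ (-(2 * s)) * (1 + ‖w⁻¹ • u‖ ^ 2) ^ (-s) := by
  have hfactor : ‖u‖ ^ 2 + w ^ 2 = |w| ^ (2 : ℝ) * (1 + ‖w⁻¹ • u‖ ^ 2) := by
    rw [rpow_two, norm_smul, norm_inv, norm_eq_abs, mul_pow, inv_pow, sq_abs]
    field_simp
    ring
  rw [hfactor, mul_rpow (by positivity) (by positivity), ← rpow_mul (abs_nonneg w), mul_neg]

variable [FiniteDimensional ℝ E] [MeasurableSpace E] [BorelSpace E] {μ : Measure E}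
  [μ.IsAddHaarMeasure]

lemma integrable_norm_sub_sq_add_sq_rpow_neg (x : E) {w s : ℝ} (hw : w ≠ 0)
    (hs : (Module.finrank ℝ E : ℝ) < 2 * s) :
    Integrable (fun u => (‖x - u‖ ^ 2 + w ^ 2) ^ (-s)) μ := by
  have hbracket : Integrable (fun u : E => (1 + ‖u‖ ^ 2) ^ (-s)) μ := by
    simpa only [neg_div, mul_div_cancel_left₀ s two_ne_zero] using
      integrable_rpow_neg_one_add_norm_sq (μ := μ) hs
  simp_rw [norm_sq_add_sq_rpow_neg _ hw]
  exact ((hbracket.comp_smul (inv_ne_zero hw)).comp_sub_left x).const_mul _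

lemma integral_norm_sub_sq_add_sq_rpow_neg (x : E) {w : ℝ} (hw : w ≠ 0) (s : ℝ) :
    ∫ u, (‖x - u‖ ^ 2 + w ^ 2) ^ (-s) ∂μ =
      (∫ u, (1 + ‖u‖ ^ 2) ^ (-s) ∂μ) * |w| ^ (Module.finrank ℝ E - 2 * s) := by
  rw [integral_sub_left_eq_self (fun u => (‖u‖ ^ 2 + w ^ 2) ^ (-s)) μ x]
  simp_rw [norm_sq_add_sq_rpow_neg _ hw]
  rw [integral_const_mul, Measure.integral_comp_inv_smul μ (fun u => (1 + ‖u‖ ^ 2) ^ (-s)) w,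
    smul_eq_mul, abs_pow, sub_eq_neg_add, rpow_add (abs_pos.2 hw), rpow_natCast]
  ring

end NormSqAddSq

section GaussianMoment

variable {a r : ℝ}

lemma integral_abs_rpow_mul_exp_neg_mul_sq (ha : 0 < a) (hr : -1 < r) :
    ∫ v : ℝ, |v| ^ r * exp (-a * v ^ 2) = a ^ (-(r + 1) / 2) * Gamma ((r + 1) / 2) := by
  have h := integral_comp_abs (f := fun v : ℝ => v ^ r * exp (-a * v ^ (2 : ℝ)))
  rw [integral_rpow_mul_exp_neg_mul_rpow two_pos hr ha] at h
  simp only [rpow_two, sq_abs] at h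
  rw [h]
  ring

lemma integrable_abs_rpow_mul_exp_neg_mul_sq (ha : 0 < a) (hr : -1 < r) :
    Integrable fun v : ℝ => |v| ^ r * exp (-a * v ^ 2) := by
  have hΓ : 0 < Gamma ((r + 1) / 2) := Gamma_pos_of_pos (by linarith)
  refine .of_integral_ne_zero ?_
  rw [integral_abs_rpow_mul_exp_neg_mul_sq ha hr]
  positivity

end GaussianMoment

section CauchyKernel

variable {a p q v y : ℝ}

lemma cauchy_kernel_mul_rpow_mul_exp_le {u : ℝ} (x : ℝ) (ha : 0 ≤ a) (hp : 0 ≤ p) (hq : 0 ≤ q)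
    (hv : 0 < v) (huv : v ≤ u) (hvy : v ≠ y) :
    ((x - u) ^ 2 + (y - v) ^ 2) ^ (-p) * (u ^ 2 + v ^ 2) ^ (-q) * exp (-a * u * v) ≤
      ((‖x - u‖ ^ 2 + (v - y) ^ 2) ^ (-(p + q)) + (‖0 - u‖ ^ 2 + v ^ 2) ^ (-(p + q))) *
        exp (-a * v ^ 2) := by
  have : v - y ≠ 0 := sub_ne_zero.2 hvy
  have hexp : -a * u * v ≤ -a * v ^ 2 := by
    nlinarith [mul_nonneg (mul_nonneg ha hv.le) (sub_nonneg.2 huv)]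
  simp only [norm_eq_abs, sq_abs, zero_sub, neg_sq, sub_sq_comm y v]
  gcongr
  exact rpow_neg_mul_rpow_neg_le_add (by positivity) (by positivity) hp hq

lemma integral_cauchy_kernel_mul_rpow_mul_exp_le (x : ℝ) (ha : 0 ≤ a) (hp : 0 ≤ p) (hq : 0 ≤ q)
    (hpq : 1 / 2 < p + q) (hv : 0 < v) (hvy : v ≠ y) :
    ∫ u in Set.Ioi v,
        ((x - u) ^ 2 + (y - v) ^ 2) ^ (-p) * (u ^ 2 + v ^ 2) ^ (-q) * exp (-a * u * v) ≤
      (∫ t : ℝ, (1 + ‖t‖ ^ 2) ^ (-(p + q))) *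
        ((|v - y| ^ (1 - 2 * (p + q)) + |v| ^ (1 - 2 * (p + q))) * exp (-a * v ^ 2)) := by
  have hw : v - y ≠ 0 := sub_ne_zero.2 hvy
  have hdim : (Module.finrank ℝ ℝ : ℝ) < 2 * (p + q) := by
    rw [Module.finrank_self, Nat.cast_one]
    linarith
  have hix := integrable_norm_sub_sq_add_sq_rpow_neg (μ := volume) x hw hdim
  have hi0 := integrable_norm_sub_sq_add_sq_rpow_neg (μ := volume) 0 hv.ne' hdim
  have hi := (hix.add hi0).mul_const (exp (-a * v ^ 2))
  calc
    _ ≤ ∫ u in Set.Ioi v, ((‖x - u‖ ^ 2 + (v - y) ^ 2) ^ (-(p + q)) +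
          (‖0 - u‖ ^ 2 + v ^ 2) ^ (-(p + q))) * exp (-a * v ^ 2) :=
      integral_mono_of_nonneg (.of_forall fun u => by positivity) hi.restrict <|
        (ae_restrict_mem measurableSet_Ioi).mono fun u (hu : v < u) =>
          cauchy_kernel_mul_rpow_mul_exp_le x ha hp hq hv hu.le hvy
    _ ≤ ∫ u, ((‖x - u‖ ^ 2 + (v - y) ^ 2) ^ (-(p + q)) +
          (‖0 - u‖ ^ 2 + v ^ 2) ^ (-(p + q))) * exp (-a * v ^ 2) :=
      setIntegral_le_integral hi (.of_forall fun u => by positivity)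
    _ = _ := by
      rw [integral_mul_const, integral_add hix hi0, integral_norm_sub_sq_add_sq_rpow_neg x hw,
        integral_norm_sub_sq_add_sq_rpow_neg 0 hv.ne', Module.finrank_self, Nat.cast_one]
      ring

lemma integral_integral_cauchy_kernel_mul_rpow_mul_exp_le (ha : 0 < a) (hp : 0 ≤ p) (hq : 0 ≤ q)
    (hpq : 1 / 2 < p + q) (hpq' : p + q < 1) (x y : ℝ) :
    ∫ v in Set.Ioi (0 : ℝ), ∫ u in Set.Ioi v,
        ((x - u) ^ 2 + (y - v) ^ 2) ^ (-p) * (u ^ 2 + v ^ 2) ^ (-q) * exp (-a * u * v) ≤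
      3 * (∫ t : ℝ, (1 + ‖t‖ ^ 2) ^ (-(p + q))) * Gamma (1 - (p + q)) * a ^ (p + q - 1) := by
  set K : ℝ := ∫ t : ℝ, (1 + ‖t‖ ^ 2) ^ (-(p + q))
  have : 0 ≤ K := integral_nonneg fun t => by positivity
  have hr : -1 < 1 - 2 * (p + q) := by linarith
  let h : ℝ → ℝ := fun v => |v| ^ (1 - 2 * (p + q)) * exp (-a * v ^ 2)
  have hi₀ : Integrable h := integrable_abs_rpow_mul_exp_neg_mul_sq ha hr
  have hiy : Integrable fun v => h (v - y) := hi₀.comp_sub_right y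
  have hi : Integrable fun v => K * (h (v - y) + 2 * h v) :=
    (hiy.add (hi₀.const_mul 2)).const_mul K
  calc
    _ ≤ ∫ v in Set.Ioi (0 : ℝ), K * (h (v - y) + 2 * h v) := by
      refine integral_mono_of_nonneg (.of_forall fun v => integral_nonneg fun u => by positivity)
        hi.integrableOn ?_
      filter_upwards [ae_restrict_mem measurableSet_Ioi,
        ae_restrict_of_ae (Measure.ae_ne volume y)] with v (hv : 0 < v) hvy
      refine (integral_cauchy_kernel_mul_rpow_mul_exp_le x ha.le hp hq hpq hv hvy).trans ?_
      have hrecentre := abs_rpow_mul_exp_neg_mul_sq_le_add (r := 1 - 2 * (p + q)) ha.le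
        (by linarith) hv.ne' (sub_ne_zero.2 hvy)
      gcongr
      simp only [h]
      linarith
    _ ≤ ∫ v, K * (h (v - y) + 2 * h v) :=
      setIntegral_le_integral hi (.of_forall fun v => by positivity)
    _ = 3 * K * ∫ v, h v := by
      rw [integral_const_mul, integral_add hiy (hi₀.const_mul 2), integral_const_mul,
        integral_sub_right_eq_self h y]
      ring
    _ = 3 * K * Gamma (1 - (p + q)) * a ^ (p + q - 1) := by
      rw [integral_abs_rpow_mul_exp_neg_mul_sq ha hr]
      ring_nf

end CauchyKernel

theorem stmt_11_general {p q : ℝ} (hp : 0 ≤ p) (hq : 0 ≤ q) (hpq : 1 / 2 < p + q)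
    (hpq' : p + q < 1) : ∃ C : ℝ, 0 < C ∧ ∀ (a : ℝ), 0 < a → ∀ (c α β : ℝ),
      (∫ v in Set.Ioi (0 : ℝ), ∫ u in Set.Ioi v,
          ((α - c - u) ^ 2 + (β - v) ^ 2) ^ (-p) * (u ^ 2 + v ^ 2) ^ (-q) *
            exp (-a * u * v)) ≤
        C * a ^ (p + q - 1) := by
  refine ⟨max (3 * (∫ t : ℝ, (1 + ‖t‖ ^ 2) ^ (-(p + q))) * Gamma (1 - (p + q))) 1,
    lt_max_of_lt_right one_pos, fun a ha c α β => ?_⟩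
  refine (integral_integral_cauchy_kernel_mul_rpow_mul_exp_le ha hp hq hpq hpq' (α - c) β).trans ?_
  gcongr
  exact le_max_left _ _

/-- Double-integral estimate `I₂` in the ∂̄-problem: with Cauchy kernel, the
square-root singularity `(u²+v²)^{-1/4}` and decay `e^{-auv}`, the integral over
`{0 < v < u}` is `O(a^{-1/4})` with an absolute constant. -/
theorem stmt_11 : ∃ C : ℝ, 0 < C ∧
    ∀ (a : ℝ), 0 < a → ∀ (c α β : ℝ),
      (∫ v in Set.Ioi (0 : ℝ), ∫ u in Set.Ioi v,
          ((α - c - u) ^ 2 + (β - v) ^ 2) ^ (-(1 : ℝ) / 2) *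
            (u ^ 2 + v ^ 2) ^ (-(1 : ℝ) / 4) * Real.exp (-a * u * v)) ≤
        C * a ^ (-(1 : ℝ) / 4) := by
  simpa only [neg_div, show (1 / 2 + 1 / 4 - 1 : ℝ) = -(1 / 4) by norm_num] using
    stmt_11_general (p := 1 / 2) (q := 1 / 4) (by simp) (by simp) (by norm_num) (by norm_num)
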